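/- arXiv:1008.2935 — 2 statements merged into one kernel-verified Lean document; each statement's English description precedes it below -/
import Mathlib

section
/- Let n ∈ ℕ and let K₁, K₂ : ℝⁿ × ℝⁿ → ℂ be functions such that for all x, z ∈ ℝⁿ the function y ↦ K₁(x,y)·K₂(y,z) is integrable, and set K(x,z) := ∫_{ℝⁿ} K₁(x,y) K₂(y,z) dy. Define the envelopes e₁, e₂, e : ℝⁿ → [0,∞] by e_j(Z) := sup_{Y ∈ ℝⁿ} |K_j(Z+Y, Y)| and e(Z) := sup_{Y ∈ ℝⁿ} |K(Z+Y, Y)|. Then for every Z ∈ ℝⁿ one has e(Z) ≤ ∫_{ℝⁿ} e₁(W) e₂(Z−W) dW (the integral taken in [0,∞]); in particular, if e₁ and e₂ are measurable then ∫_{ℝⁿ} e(Z) dZ ≤ (∫_{ℝⁿ} e₁)·(∫_{ℝⁿ} e₂). (This is the kernel-level submultiplicativity underlying the Banach algebra structure in Theorem 2.15(2).) -/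
open MeasureTheory
open scoped ENNReal NNReal

/-!
The pointwise bounds `|K₁(x,y)| ≤ e₁(x-y)` and `|K₂(y,z)| ≤ e₂(y-z)` turn
`|K(Z+Y,Y)| ≤ ∫ |K₁(Z+Y,y)| |K₂(y,Y)| dy` into `∫ e₁(Z+Y-y) e₂(y-Y) dy`, which becomes
`∫ e₁(W) e₂(Z-W) dW` under the measure-preserving substitution `W = Z+Y-y`. Since this no longer
depends on `Y`, the supremum over `Y` obeys the same bound. Integrating in `Z`, Tonelli's theorem
and translation invariance give the bound by the product of the integrals.
-/

/-- A kernel is dominated pointwise by its envelope evaluated at the difference. -/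
lemma enorm_le_envelope {E : Type*} [AddCommGroup E] {K : E × E → ℂ} {e : E → ℝ≥0∞}
    (he : ∀ Z, e Z = ⨆ Y : E, (‖K (Z + Y, Y)‖₊ : ℝ≥0∞)) (x y : E) :
    ‖K (x, y)‖ₑ ≤ e (x - y) := by
  rw [he]
  refine le_iSup_of_le y ?_
  rw [sub_add_cancel]
  exact le_rfl

/-- Kernel-level submultiplicativity of envelopes under composition of integral kernels
(the computation underlying the Banach algebra structure in Theorem 2.15(2)):
the envelope of a composed kernel is dominated by the convolution of the envelopes. -/
theorem envelope_of_composed_kernel_le_convolution (n : ℕ)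
    (K₁ K₂ K : EuclideanSpace ℝ (Fin n) × EuclideanSpace ℝ (Fin n) → ℂ)
    (hint : ∀ x z : EuclideanSpace ℝ (Fin n),
      Integrable (fun y => K₁ (x, y) * K₂ (y, z)))
    (hK : ∀ x z : EuclideanSpace ℝ (Fin n), K (x, z) = ∫ y, K₁ (x, y) * K₂ (y, z))
    (e₁ e₂ e : EuclideanSpace ℝ (Fin n) → ℝ≥0∞)
    (he₁ : ∀ Z, e₁ Z = ⨆ Y : EuclideanSpace ℝ (Fin n), (‖K₁ (Z + Y, Y)‖₊ : ℝ≥0∞))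
    (he₂ : ∀ Z, e₂ Z = ⨆ Y : EuclideanSpace ℝ (Fin n), (‖K₂ (Z + Y, Y)‖₊ : ℝ≥0∞))
    (he : ∀ Z, e Z = ⨆ Y : EuclideanSpace ℝ (Fin n), (‖K (Z + Y, Y)‖₊ : ℝ≥0∞)) :
    (∀ Z : EuclideanSpace ℝ (Fin n), e Z ≤ ∫⁻ W, e₁ W * e₂ (Z - W)) ∧
    (Measurable e₁ → Measurable e₂ →
      ∫⁻ Z, e Z ≤ (∫⁻ W, e₁ W) * (∫⁻ W, e₂ W)) := by
  have hconv : ∀ Z : EuclideanSpace ℝ (Fin n), e Z ≤ ∫⁻ W, e₁ W * e₂ (Z - W) := by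
    intro Z
    rw [he]
    refine iSup_le fun Y => ?_
    calc (‖K (Z + Y, Y)‖₊ : ℝ≥0∞)
        = ‖∫ y, K₁ (Z + Y, y) * K₂ (y, Y)‖ₑ := by rw [← hK]; rfl
      _ ≤ ∫⁻ y, ‖K₁ (Z + Y, y) * K₂ (y, Y)‖ₑ := enorm_integral_le_lintegral_enorm _
      _ ≤ ∫⁻ y, e₁ (Z + Y - y) * e₂ (Z - (Z + Y - y)) := by
          refine lintegral_mono fun y => ?_
          rw [enorm_mul, show Z - (Z + Y - y) = y - Y by abel]
          exact mul_le_mul' (enorm_le_envelope he₁ _ _) (enorm_le_envelope he₂ _ _)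
      _ = ∫⁻ W, e₁ W * e₂ (Z - W) :=
          lintegral_sub_left_eq_self (fun W => e₁ W * e₂ (Z - W)) (Z + Y)
  refine ⟨hconv, fun h₁ h₂ => ?_⟩
  calc ∫⁻ Z, e Z ≤ ∫⁻ Z, ∫⁻ W, e₁ W * e₂ (Z - W) := lintegral_mono hconv
    _ = ∫⁻ W, ∫⁻ Z, e₁ W * e₂ (Z - W) := lintegral_lintegral_swap (by fun_prop)
    _ = ∫⁻ W, e₁ W * ∫⁻ Z, e₂ Z := by
        refine lintegral_congr fun W => ?_
        rw [lintegral_const_mul _ (by fun_prop), lintegral_sub_right_eq_self]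
    _ = (∫⁻ W, e₁ W) * (∫⁻ W, e₂ W) := lintegral_mul_const _ h₁
end

section
/- Let n ∈ ℕ and let p₁, p₂, p ∈ [1,∞] with 1/p = 1/p₁ + 1/p₂. Let K₁, K₂ : ℝⁿ × ℝⁿ → ℂ be measurable and let β₁, β₂ : ℝⁿ → [0,∞] be measurable functions such that for every Y ∈ ℝⁿ one has eLpNorm of (X ↦ K₁(X, X+Y)) with exponent p₁ at most β₁(Y), and eLpNorm of (X ↦ K₂(X, X+Y)) with exponent p₂ at most β₂(Y). Assume that for all x, z ∈ ℝⁿ the function y ↦ K₁(x,y)·K₂(y,z) is integrable and set K(x,z) := ∫_{ℝⁿ} K₁(x,y) K₂(y,z) dy. Then for every Y ∈ ℝⁿ, the eLpNorm of (X ↦ K(X, X+Y)) with exponent p is at most the convolution value ∫_{ℝⁿ} β₁(Z) β₂(Y−Z) dZ (integral in [0,∞]). (This Minkowski–Hölder estimate for composed kernels is the core computation in the proof of Corollary 2.14.) -/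
/-!
After the substitution `y = X + Z`, the diagonal of the composed kernel is
`K (X, X + Y) = ∫ K₁ (X, X + Z) * K₂ (X + Z, X + Y) dZ`. Minkowski's integral inequality
(`eLpNorm_lintegral_le`) moves the `Lᵖ` norm in `X` inside the `Z`-integral. For fixed `Z`, Hölder's
inequality with `1/p = 1/p₁ + 1/p₂` bounds the integrand: the first factor has norm at most `β₁ Z`,
and translation invariance of Lebesgue measure under `X ↦ X + Z` turns the second into the profile
of `K₂` at the offset `Y - Z`.

Minkowski's integral inequality for `1 < p < ∞` is obtained by testing: with `F = ∫ G(·, z) dz` and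
`0 ≤ h ≤ F` such that `∫ hᵖ < ∞`, Tonelli and Hölder give
`∫ hᵖ ≤ ∫ F hᵖ⁻¹ ≤ (∫ B) (∫ hᵖ)^(1/q)`, and one divides by the finite last factor. By
σ-finiteness, `∫ Fᵖ` is the supremum of such `∫ hᵖ`.
-/

open MeasureTheory
open scoped ENNReal NNReal

/-- Over a σ-finite measure, the integral of a `[0,∞]`-valued function is approximated from below by
integrals of simple functions of finite integral. -/
lemma exists_simpleFunc_le_lt_lintegral {α : Type*} [MeasurableSpace α] {μ : Measure α}
    [SigmaFinite μ] {f : α → ℝ≥0∞} {L : ℝ≥0∞} (hL : L < ∫⁻ x, f x ∂μ) :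
    ∃ g : SimpleFunc α ℝ≥0, (∀ x, (g x : ℝ≥0∞) ≤ f x) ∧
      ∫⁻ x, g x ∂μ < ∞ ∧ L < ∫⁻ x, g x ∂μ := by
  simp_rw [lintegral_eq_nnreal, lt_iSup_iff] at hL
  rcases hL with ⟨g₀, hg₀, g₀L⟩
  have h'L : L < ∫⁻ x, g₀ x ∂μ := by
    convert! g₀L
    rw [← SimpleFunc.lintegral_eq_lintegral, SimpleFunc.coe_map]
    simp only [Function.comp_apply]
  rcases SimpleFunc.exists_lt_lintegral_simpleFunc_of_lt_lintegral h'L with ⟨g, hg, gL, gtop⟩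
  exact ⟨g, fun x => (ENNReal.coe_le_coe.2 (hg x)).trans (hg₀ x), gL, gtop⟩

/-- Minkowski's integral inequality for a real exponent `1 < p`, with the `Lᵖ` norms of the slices
replaced by any measurable majorant `B`. -/
lemma lintegral_rpow_lintegral_le {α β : Type*} [MeasurableSpace α] [MeasurableSpace β]
    {μ : Measure α} {ν : Measure β} [SigmaFinite μ] [SFinite ν] {p : ℝ} (hp : 1 < p)
    {G : α × β → ℝ≥0∞} (hG : Measurable G) {B : β → ℝ≥0∞} (hB : Measurable B)
    (h : ∀ z, (∫⁻ x, G (x, z) ^ p ∂μ) ^ (1 / p) ≤ B z) :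
    (∫⁻ x, (∫⁻ z, G (x, z) ∂ν) ^ p ∂μ) ^ (1 / p) ≤ ∫⁻ z, B z ∂ν := by
  have hp0 : 0 < p := by linarith
  have hpq : p.HolderConjugate (Real.conjExponent p) := .conjExponent hp
  set q := Real.conjExponent p
  rw [one_div, ENNReal.rpow_inv_le_iff hp0]
  refine le_of_forall_lt fun L hL => ?_
  obtain ⟨g, hgF, hgtop, hLg⟩ := exists_simpleFunc_le_lt_lintegral hL
  refine hLg.trans_le ?_
  set I := ∫⁻ x, g x ∂μ with hI
  set f : α → ℝ≥0∞ := fun x => (g x : ℝ≥0∞) ^ (1 / p) with hf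
  have hfm : Measurable f := (g.measurable.coe_nnreal_ennreal).pow_const _
  have hfp : ∀ x, f x ^ p = g x := fun x => by
    simp only [hf, ← ENNReal.rpow_mul, one_div, inv_mul_cancel₀ hp0.ne', ENNReal.rpow_one]
  have hfF : ∀ x, f x ≤ ∫⁻ z, G (x, z) ∂ν := fun x => by
    simp only [hf, one_div]
    rw [ENNReal.rpow_inv_le_iff hp0]
    exact hgF x
  have key : I ≤ (∫⁻ z, B z ∂ν) * I ^ (1 / q) := by
    calc I = ∫⁻ x, f x * f x ^ (p - 1) ∂μ := by
          refine lintegral_congr fun x => ?_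
          rw [← hfp x]
          conv_rhs => enter [1]; rw [← ENNReal.rpow_one (f x)]
          rw [← ENNReal.rpow_add_of_nonneg _ _ zero_le_one (by linarith)]
          congr 1; ring
      _ ≤ ∫⁻ x, (∫⁻ z, G (x, z) ∂ν) * f x ^ (p - 1) ∂μ :=
          lintegral_mono fun x => by gcongr; exact hfF x
      _ = ∫⁻ x, ∫⁻ z, G (x, z) * f x ^ (p - 1) ∂ν ∂μ := by
          refine lintegral_congr fun x => ?_
          rw [lintegral_mul_const _ (by fun_prop)]
      _ = ∫⁻ z, ∫⁻ x, G (x, z) * f x ^ (p - 1) ∂μ ∂ν :=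
          lintegral_lintegral_swap (by fun_prop)
      _ ≤ ∫⁻ z, B z * I ^ (1 / q) ∂ν := by
          refine lintegral_mono fun z => ?_
          refine (ENNReal.lintegral_mul_rpow_le_lintegral_rpow_mul_lintegral_rpow hpq
            (by fun_prop) (by fun_prop)).trans ?_
          simp only [hfp]
          gcongr
          exact h z
      _ = _ := lintegral_mul_const _ hB
  rcases eq_or_ne I 0 with h0 | h0
  · simp [h0]
  -- `I` is finite and nonzero, so `I = I ^ (1/p) * I ^ (1/q)` may be divided by `I ^ (1/q)`.
  rw [← ENNReal.rpow_inv_le_iff hp0]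
  have hsplit : I = I ^ p⁻¹ * I ^ (1 / q) := by
    rw [← ENNReal.rpow_add _ _ h0 hgtop.ne, one_div, hpq.inv_add_inv_eq_one, ENNReal.rpow_one]
  have hne0 : I ^ (1 / q) ≠ 0 := by
    simp [ENNReal.rpow_eq_zero_iff, h0, hgtop.ne]
  have hnetop : I ^ (1 / q) ≠ ∞ := by
    simp [ENNReal.rpow_eq_top_iff, h0, hgtop.ne]
  refine (ENNReal.mul_le_mul_iff_left hne0 hnetop).1 ?_
  rwa [← hsplit]

/-- **Minkowski's integral inequality** for nonnegative functions, with the `Lᵖ` norms of the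
slices replaced by any measurable majorant `B`; this sidesteps the measurability of
`z ↦ ‖G(·, z)‖_p`. -/
lemma eLpNorm_lintegral_le {α β : Type*} [MeasurableSpace α] [MeasurableSpace β]
    {μ : Measure α} {ν : Measure β} [SigmaFinite μ] [SFinite ν] {p : ℝ≥0∞} (hp : 1 ≤ p)
    {G : α × β → ℝ≥0∞} (hG : Measurable G) {B : β → ℝ≥0∞} (hB : Measurable B)
    (h : ∀ z, eLpNorm (fun x => G (x, z)) p μ ≤ B z) :
    eLpNorm (fun x => ∫⁻ z, G (x, z) ∂ν) p μ ≤ ∫⁻ z, B z ∂ν := by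
  rcases eq_or_ne p ∞ with rfl | htop
  · -- `{G > B}` has null slices in `x`, hence is null in the product, hence has null slices in `z`.
    have hae : ∀ᵐ w ∂(ν.prod μ), G (w.2, w.1) ≤ B w.1 := by
      rw [Measure.ae_prod_iff_ae_ae
        (measurableSet_le (by fun_prop) (by fun_prop))]
      refine .of_forall fun z => ?_
      have := h z
      rw [eLpNorm_exponent_top] at this
      filter_upwards [enorm_ae_le_eLpNormEssSup (fun x => G (x, z)) μ] with x hx
      exact (by simpa using hx : G (x, z) ≤ _).trans this
    have hae' : ∀ᵐ x ∂μ, ∀ᵐ z ∂ν, G (x, z) ≤ B z := by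
      rw [← Measure.prod_swap] at hae
      exact Measure.ae_ae_of_ae_prod (ae_of_ae_map measurable_swap.aemeasurable hae)
    rw [eLpNorm_exponent_top]
    refine eLpNormEssSup_le_of_ae_enorm_bound ?_
    filter_upwards [hae'] with x hx
    simpa using lintegral_mono_ae hx
  rcases hp.eq_or_lt with rfl | hp1
  · simp only [eLpNorm_one_eq_lintegral_enorm, enorm_eq_self] at h ⊢
    rw [lintegral_lintegral_swap (by fun_prop)]
    exact lintegral_mono h
  have hp0 : p ≠ 0 := (zero_lt_one.trans hp1).ne'
  simp only [eLpNorm_eq_lintegral_rpow_enorm_toReal hp0 htop, enorm_eq_self] at h ⊢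
  refine lintegral_rpow_lintegral_le ?_ hG hB h
  simpa using (ENNReal.toReal_lt_toReal ENNReal.one_ne_top htop).2 hp1

/-- The Minkowski–Hölder estimate for composed kernels which is the core computation in
the proof of Corollary 2.14: if the diagonal `Lᵖ¹`/`Lᵖ²` profiles of two kernels are
dominated by `β₁`, `β₂`, then the diagonal `Lᵖ` profile of the composed kernel is
dominated by the convolution `β₁ ⋆ β₂`, where `1/p = 1/p₁ + 1/p₂`. -/
theorem composed_kernel_diagonal_eLpNorm_le_convolution (n : ℕ)
    (p₁ p₂ p : ℝ≥0∞) (hp₁ : 1 ≤ p₁) (hp₂ : 1 ≤ p₂) (hp : 1 ≤ p)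
    (hpe : 1 / p = 1 / p₁ + 1 / p₂)
    (K₁ K₂ K : EuclideanSpace ℝ (Fin n) × EuclideanSpace ℝ (Fin n) → ℂ)
    (hK₁ : Measurable K₁) (hK₂ : Measurable K₂)
    (β₁ β₂ : EuclideanSpace ℝ (Fin n) → ℝ≥0∞)
    (hβ₁m : Measurable β₁) (hβ₂m : Measurable β₂)
    (hβ₁ : ∀ Y : EuclideanSpace ℝ (Fin n),
      eLpNorm (fun X => K₁ (X, X + Y)) p₁ volume ≤ β₁ Y)
    (hβ₂ : ∀ Y : EuclideanSpace ℝ (Fin n),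
      eLpNorm (fun X => K₂ (X, X + Y)) p₂ volume ≤ β₂ Y)
    (hint : ∀ x z : EuclideanSpace ℝ (Fin n),
      Integrable (fun y => K₁ (x, y) * K₂ (y, z)))
    (hK : ∀ x z : EuclideanSpace ℝ (Fin n), K (x, z) = ∫ y, K₁ (x, y) * K₂ (y, z)) :
    ∀ Y : EuclideanSpace ℝ (Fin n),
      eLpNorm (fun X => K (X, X + Y)) p volume ≤ ∫⁻ Z, β₁ Z * β₂ (Y - Z) := by
  intro Y
  have : ENNReal.HolderTriple p₁ p₂ p := ⟨by simpa using hpe.symm⟩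
  have hdiag : ∀ X, ‖K (X, X + Y)‖ₑ ≤ ∫⁻ Z, ‖K₁ (X, X + Z) * K₂ (X + Z, X + Y)‖ₑ := fun X => by
    rw [hK, ← integral_add_left_eq_self (fun y => K₁ (X, y) * K₂ (y, X + Y)) X]
    exact enorm_integral_le_lintegral_enorm _
  refine (eLpNorm_mono_enorm (g := fun X => ∫⁻ Z, ‖K₁ (X, X + Z) * K₂ (X + Z, X + Y)‖ₑ)
    (fun X => by simpa using hdiag X)).trans ?_
  refine eLpNorm_lintegral_le
    (G := fun w => ‖K₁ (w.1, w.1 + w.2) * K₂ (w.1 + w.2, w.1 + Y)‖ₑ) hp (by fun_prop)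
    (by fun_prop) fun Z => ?_
  have hm₁ : Measurable fun X => K₁ (X, X + Z) := by fun_prop
  have hm₂ : Measurable fun X => K₂ (X, X + (Y - Z)) := by fun_prop
  -- `X ↦ K₂ (X + Z, X + Y)` is a translate of the slice of `K₂` with offset `Y - Z`.
  have htrans : eLpNorm (fun X => K₂ (X + Z, X + Y)) p₂ volume ≤ β₂ (Y - Z) := by
    refine le_trans (le_of_eq ?_) (hβ₂ (Y - Z))
    rw [← eLpNorm_comp_measurePreserving hm₂.aestronglyMeasurable
      (measurePreserving_add_right volume Z)]
    congr 1
    ext X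
    simp only [Function.comp_apply, show X + Z + (Y - Z) = X + Y by abel]
  rw [eLpNorm_enorm]
  exact (eLpNorm_smul_le_mul_eLpNorm (p := p₁) (q := p₂)
    (by fun_prop : Measurable fun X => K₂ (X + Z, X + Y)).aestronglyMeasurable
    hm₁.aestronglyMeasurable).trans (mul_le_mul' (hβ₁ Z) htrans)
end
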